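/- Let K ≥ 1 be an integer; for each k ≤ K let f_k ≥ 1 and S^{k1},…,S^{k n̄} be symmetric f_k×f_k matrices defining S_k[z] = ∑_i z_i S^{ki}, such that z = 0 whenever S_k[z] = 0 for all k; let 𝒯 ⊆ ℝ_{≥0}^K be a nonempty convex compact monotone set containing a point with all coordinates positive. Let Q be a symmetric n̄×n̄ matrix, q ∈ ℝ^{n̄}, and Q_+ = [[Q, q],[qᵀ, 0]]. Define Opt[1] = inf{ φ_𝒯(λ[Λ]) + μ : Λ_k ∈ S^{f_k} positive semidefinite, μ ≥ 0, Q_+ ⪯ BlockDiag(∑_k 𝒮_k^*[Λ_k], μ) }. Then Opt[1] = max{ Tr(VQ) + 2vᵀq : V ∈ S^{n̄}, v ∈ ℝ^{n̄}, t ∈ 𝒯, 𝒮_k[V] ⪯ t_k·I_{f_k} for k = 1,…,K, [[V, v],[vᵀ, 1]] positive semidefinite }, and this maximum is attained. -/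

import Mathlib

open Matrix BigOperators

noncomputable section

/-- The spectratope `𝒳[s]`: image under `z ↦ P z` of the set of `z` such that
`S_k[z]² ⪯ s t_k I` for some `t ∈ 𝒯`, where `S_k[z] = ∑ i z_i S^{ki}`. -/
def spectratope {n nb K : ℕ} (f : Fin K → ℕ) (P : Matrix (Fin n) (Fin nb) ℝ)
    (Smat : (k : Fin K) → Fin nb → Matrix (Fin (f k)) (Fin (f k)) ℝ)
    (T : Set (Fin K → ℝ)) (s : ℝ) : Set (Fin n → ℝ) :=
  {x | ∃ z : Fin nb → ℝ, ∃ t ∈ T, x = P *ᵥ z ∧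
    ∀ k, ((s * t k) • (1 : Matrix (Fin (f k)) (Fin (f k)) ℝ)
            - (∑ i, z i • Smat k i) ^ 2).PosSemidef}

/-- Support function `φ_𝒯(λ) = max_{t ∈ 𝒯} λᵀ t`. -/
def suppFn {K : ℕ} (T : Set (Fin K → ℝ)) (lam : Fin K → ℝ) : ℝ :=
  sSup ((fun t => ∑ k, lam k * t k) '' T)

/-- `𝒮_k^*[Λ]`, the matrix with entries `Tr(Λ (S^{ki} S^{kj} + S^{kj} S^{ki})/2)`. -/
def calSstar {nb fk : ℕ} (Sm : Fin nb → Matrix (Fin fk) (Fin fk) ℝ)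
    (Λ : Matrix (Fin fk) (Fin fk) ℝ) : Matrix (Fin nb) (Fin nb) ℝ :=
  Matrix.of fun i j => (Λ * ((1 / 2 : ℝ) • (Sm i * Sm j + Sm j * Sm i))).trace

/-- `λ[Λ] = (Tr Λ_1, …, Tr Λ_K)`. -/
def lamOf {K : ℕ} {f : Fin K → ℕ}
    (Λ : (k : Fin K) → Matrix (Fin (f k)) (Fin (f k)) ℝ) : Fin K → ℝ :=
  fun k => (Λ k).trace

/-- `Q_+ = [[Q, q],[qᵀ, 0]]`. -/
def qPlus {m : ℕ} (Q : Matrix (Fin m) (Fin m) ℝ) (q : Fin m → ℝ) :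
    Matrix (Fin m ⊕ Unit) (Fin m ⊕ Unit) ℝ :=
  Matrix.fromBlocks Q (Matrix.of fun i _ => q i) (Matrix.of fun _ j => q j) 0

/-- `BlockDiag(M, μ)`. -/
def blockDiagOne {m : ℕ} (M : Matrix (Fin m) (Fin m) ℝ) (μ : ℝ) :
    Matrix (Fin m ⊕ Unit) (Fin m ⊕ Unit) ℝ :=
  Matrix.fromBlocks M 0 0 (Matrix.of fun _ _ => μ)

/-- `𝒮_k[V] = ∑_{i,j} V_{ij} (S^{ki} S^{kj} + S^{kj} S^{ki})/2`. -/
def calS {nb fk : ℕ} (Sm : Fin nb → Matrix (Fin fk) (Fin fk) ℝ)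
    (V : Matrix (Fin nb) (Fin nb) ℝ) : Matrix (Fin fk) (Fin fk) ℝ :=
  ∑ i, ∑ j, V i j • ((1 / 2 : ℝ) • (Sm i * Sm j + Sm j * Sm i))

/-!
The primal program is a conic program `max {φ x | x ∈ X, A x ≤ b}`, where `X` consists of the pairs
`(W, t)` with `W = [[V, v],[vᵀ, s]] ⪰ 0` and `t ∈ 𝒯`, and the constraints are `𝒮_k[V] - t_k I ⪯ 0`
and `s ≤ 1`. Replacing `s = 1` by `s ≤ 1` is harmless because `Q₊` has a zero corner.

Nondegeneracy makes `∑ 𝒮_k^*[I]` positive definite, so the constraints bound `Tr V`: the primal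
feasible set is compact, and the hypograph of the optimal value as a function of the right-hand
side `b` is closed. Strictly separating a point `(c, b)` above this convex hypograph from it yields
nonnegative multipliers `Λ_k` and `μ` with `φ x + g (b - A x) ≤ c` on `X`; a feasible point suffices
for the separating hyperplane to be non-vertical because the separation is strict. Since the left
side equals `∑ t_k Tr Λ_k + μ - Tr(W D)` with `D = BlockDiag(∑ 𝒮_k^*[Λ_k], μ) - Q₊`, the choice
`W = 0` bounds the dual objective by `c`, and letting `W` run through the cone forces `D ⪰ 0`.
-/

lemma nonneg_of_forall_le_mul {a b : ℝ} (h : ∀ s, 0 ≤ s → a ≤ s * b) : 0 ≤ b := by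
  by_contra! hb
  have hs : 0 ≤ (|a| + 1) / -b := div_nonneg (by positivity) (by linarith)
  have := h _ hs
  rw [div_neg, neg_mul, div_mul_cancel₀ _ hb.ne] at this
  linarith [neg_abs_le a]

section ConicDuality

/-- Properness of the constraint `A x ≤ z` on `X`: as long as the right-hand side `z` stays in a
compact set, so does the solution `x ∈ X`. -/
def HasCompactSublevels {E F : Type*} [TopologicalSpace E] [TopologicalSpace F] [LE F]
    (X : Set E) (A : E → F) : Prop :=
  ∀ B : Set F, IsCompact B → ∃ D, IsCompact D ∧ ∀ x ∈ X, ∀ z ∈ B, A x ≤ z → x ∈ D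

lemma HasCompactSublevels.isCompact_setOf_le {E F : Type*} [TopologicalSpace E]
    [TopologicalSpace F] [Preorder F] [ClosedIicTopology F] {X : Set E} {A : E → F}
    (hA : HasCompactSublevels X A) (hX : IsClosed X) (hAc : Continuous A) (b : F) :
    IsCompact {x ∈ X | A x ≤ b} := by
  obtain ⟨D, hD, hmem⟩ := hA {b} isCompact_singleton
  exact hD.of_isClosed_subset (hX.inter (isClosed_Iic.preimage hAc))
    fun x hx => hmem x hx.1 b rfl hx.2

variable {E F : Type*} [AddCommGroup E] [Module ℝ E] [TopologicalSpace E]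
  [AddCommGroup F] [PartialOrder F] [Module ℝ F] [TopologicalSpace F]

/-- Hypograph of the value function `z ↦ max {φ x | x ∈ X, A x ≤ z}` of a conic program, as a
function of the right-hand side of its constraint. -/
def valueHypograph (X : Set E) (φ : E →L[ℝ] ℝ) (A : E →L[ℝ] F) : Set (ℝ × F) :=
  {p | ∃ x ∈ X, p.1 ≤ φ x ∧ A x ≤ p.2}

lemma convex_valueHypograph [IsOrderedAddMonoid F] [PosSMulMono ℝ F] {X : Set E}
    (hX : Convex ℝ X) (φ : E →L[ℝ] ℝ) (A : E →L[ℝ] F) : Convex ℝ (valueHypograph X φ A) := by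
  rintro p ⟨x, hx, hxφ, hxA⟩ p' ⟨x', hx', hxφ', hxA'⟩ a a' ha ha' haa'
  refine ⟨a • x + a' • x', hX hx hx' ha ha' haa', ?_, ?_⟩
  · rw [map_add, map_smul, map_smul]
    exact add_le_add (smul_le_smul_of_nonneg_left hxφ ha) (smul_le_smul_of_nonneg_left hxφ' ha')
  · rw [map_add, map_smul, map_smul]
    exact add_le_add (smul_le_smul_of_nonneg_left hxA ha) (smul_le_smul_of_nonneg_left hxA' ha')

lemma HasCompactSublevels.isClosed_valueHypograph [FirstCountableTopology E]
    [FirstCountableTopology F] [OrderClosedTopology F] {X : Set E} {A : E →L[ℝ] F}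
    (hA : HasCompactSublevels X A) (hX : IsClosed X) (φ : E →L[ℝ] ℝ) :
    IsClosed (valueHypograph X φ A) := by
  refine IsSeqClosed.isClosed fun p p₀ hp hlim => ?_
  choose x hxX hxφ hxA using hp
  have hlim₂ := (continuous_snd.tendsto p₀).comp hlim
  obtain ⟨D, hD, hmem⟩ := hA _ hlim₂.isCompact_insert_range
  obtain ⟨x₀, -, σ, hσ, hx₀⟩ :=
    hD.tendsto_subseq fun n => hmem (x n) (hxX n) _ (Set.mem_insert_of_mem _ ⟨n, rfl⟩) (hxA n)
  have hlimσ := hlim.comp hσ.tendsto_atTop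
  exact ⟨x₀, hX.mem_of_tendsto hx₀ (.of_forall fun n => hxX (σ n)),
    le_of_tendsto_of_tendsto' ((continuous_fst.tendsto p₀).comp hlimσ)
      ((φ.continuous.tendsto x₀).comp hx₀) fun n => hxφ (σ n),
    le_of_tendsto_of_tendsto' ((A.continuous.tendsto x₀).comp hx₀)
      ((continuous_snd.tendsto p₀).comp hlimσ) fun n => hxA (σ n)⟩

theorem exists_nonneg_multiplier [IsOrderedAddMonoid F] [PosSMulMono ℝ F]
    [IsTopologicalAddGroup F] [ContinuousSMul ℝ F] [LocallyConvexSpace ℝ F] {X : Set E}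
    (hX : Convex ℝ X) {φ : E →L[ℝ] ℝ} {A : E →L[ℝ] F} (hclosed : IsClosed (valueHypograph X φ A))
    {b : F} {c : ℝ} (hne : ∃ x ∈ X, A x ≤ b) (hlt : ∀ x ∈ X, A x ≤ b → φ x < c) :
    ∃ g : F →L[ℝ] ℝ, (∀ z, 0 ≤ z → 0 ≤ g z) ∧ ∀ x ∈ X, φ x + g (b - A x) ≤ c := by
  have hnotMem : (c, b) ∉ valueHypograph X φ A := fun ⟨x, hx, hcx, hxb⟩ =>
    (hlt x hx hxb).not_ge hcx
  obtain ⟨h, u, hu, hcb⟩ :=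
    geometric_hahn_banach_closed_point (convex_valueHypograph hX φ A) hclosed hnotMem
  set α : ℝ := h (1, 0)
  set ℓ : F →L[ℝ] ℝ := h.comp (.inr ℝ ℝ F)
  have hsplit : ∀ r z, h (r, z) = r * α + ℓ z := fun r z => by
    have : (r, z) = r • ((1, 0) : ℝ × F) + (0, z) := by simp
    rw [this, map_add, map_smul, smul_eq_mul]
    rfl
  have hlow : ∀ x ∈ X, ∀ z, A x ≤ z → φ x * α + ℓ z < c * α + ℓ b := fun x hx z hz => by
    simpa only [hsplit] using (hu (φ x, z) ⟨x, hx, le_rfl, hz⟩).trans hcb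
  obtain ⟨x₀, hx₀, hx₀b⟩ := hne
  have hα : 0 < α := by
    have : 0 < (c - φ x₀) * α := by linarith [hlow x₀ hx₀ b hx₀b]
    exact pos_of_mul_pos_right this (sub_pos.2 (hlt x₀ hx₀ hx₀b)).le
  have hℓ : ∀ z, 0 ≤ z → 0 ≤ -ℓ z := fun z hz =>
    nonneg_of_forall_le_mul (a := φ x₀ * α - c * α) fun s hs => by
      have := hlow x₀ hx₀ (b + s • z) (hx₀b.trans (le_add_of_nonneg_right (smul_nonneg hs hz)))
      rw [map_add, map_smul, smul_eq_mul] at this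
      linarith
  refine ⟨-(α⁻¹ • ℓ), fun z hz => ?_, fun x hx => ?_⟩
  · simpa using mul_nonneg (inv_nonneg.2 hα.le) (hℓ z hz)
  · have := hlow x hx (A x) le_rfl
    have hdiv : φ x + α⁻¹ * (ℓ (A x) - ℓ b) ≤ c := by
      rw [← mul_le_mul_iff_left₀ hα]
      field_simp
      linarith
    simp only [_root_.neg_apply, _root_.smul_apply, map_sub,
      smul_eq_mul]
    linarith

end ConicDuality

section PosSemidef

instance matrix_locallyConvexSpace {m n : Type*} : LocallyConvexSpace ℝ (Matrix m n ℝ) :=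
  inferInstanceAs (LocallyConvexSpace ℝ (m → n → ℝ))

instance matrix_firstCountableTopology {m n : Type*} [Countable m] [Countable n] :
    FirstCountableTopology (Matrix m n ℝ) :=
  inferInstanceAs (FirstCountableTopology (m → n → ℝ))

open scoped MatrixOrder

variable {m : Type*}

lemma convex_setOf_posSemidef : Convex ℝ {M : Matrix m m ℝ | M.PosSemidef} :=
  fun _ hM _ hN _ _ ha hb _ => (hM.smul ha).add (hN.smul hb)

lemma isClosed_setOf_posSemidef : IsClosed {M : Matrix m m ℝ | M.PosSemidef} := by
  simp only [PosSemidef, IsHermitian, Set.ofPred_and, Set.ofPred_forall]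
  refine (isClosed_eq (by fun_prop) continuous_id).inter
    (isClosed_iInter fun x => isClosed_le continuous_const ?_)
  unfold Finsupp.sum
  fun_prop

instance matrix_orderClosedTopology : OrderClosedTopology (Matrix m m ℝ) where
  isClosed_le' := isClosed_setOf_posSemidef.preimage (continuous_snd.sub continuous_fst)

lemma posSemidef_vecMulVec_self [Finite m] (x : m → ℝ) : (vecMulVec x x).PosSemidef := by
  simpa using posSemidef_vecMulVec_self_star x

variable [Fintype m]

lemma posSemidef_iff_isSymm_and_forall {M : Matrix m m ℝ} :
    M.PosSemidef ↔ M.IsSymm ∧ ∀ x, 0 ≤ x ⬝ᵥ (M *ᵥ x) := by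
  simp only [posSemidef_iff_dotProduct_mulVec, isHermitian_iff_isSymm, star_trivial]

lemma trace_vecMulVec_mul (x y : m → ℝ) (M : Matrix m m ℝ) :
    (vecMulVec x y * M).trace = y ⬝ᵥ (M *ᵥ x) := by
  rw [vecMulVec_mul, trace_vecMulVec, dotProduct_comm, ← dotProduct_mulVec]

lemma trace_mul_nonneg_of_posSemidef {M N : Matrix m m ℝ} (hM : M.PosSemidef)
    (hN : N.PosSemidef) : 0 ≤ (M * N).trace := by
  classical
  obtain ⟨C, rfl⟩ := CStarAlgebra.nonneg_iff_eq_star_mul_self.mp hM.nonneg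
  rw [mul_assoc, trace_mul_comm]
  exact (hN.mul_mul_conjTranspose_same C).trace_nonneg

lemma posSemidef_of_forall_le_trace_mul {M : Matrix m m ℝ} (hM : M.IsSymm) {a : ℝ}
    (h : ∀ W : Matrix m m ℝ, W.PosSemidef → a ≤ (W * M).trace) : M.PosSemidef := by
  refine posSemidef_iff_isSymm_and_forall.2
    ⟨hM, fun x => nonneg_of_forall_le_mul (a := a) fun s hs => ?_⟩
  simpa only [smul_mul_assoc, trace_smul, trace_vecMulVec_mul, smul_eq_mul] using
    h _ ((posSemidef_vecMulVec_self x).smul hs)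

lemma exists_pos_mul_trace_le_trace_mul {M : Matrix m m ℝ} (hM : M.PosDef) :
    ∃ δ > (0 : ℝ), ∀ V : Matrix m m ℝ, V.PosSemidef → δ * V.trace ≤ (V * M).trace := by
  classical
  obtain ⟨δ, hδ, hle⟩ : ∃ δ > (0 : ℝ), (M - δ • (1 : Matrix m m ℝ)).PosSemidef := by
    cases subsingleton_or_nontrivial (Matrix m m ℝ)
    · exact ⟨1, one_pos, by simpa only [Subsingleton.elim _ (0 : Matrix m m ℝ)] using .zero⟩
    · simpa only [Algebra.algebraMap_eq_smul_one, Matrix.le_iff] using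
        (CFC.exists_pos_algebraMap_le_iff hM.isHermitian).2
          fun r hr => hM.isStrictlyPositive.spectrum_pos hr
  refine ⟨δ, hδ, fun V hV => sub_nonneg.1 ?_⟩
  simpa only [mul_sub, trace_sub, mul_smul_comm, mul_one, trace_smul, smul_eq_mul] using
    trace_mul_nonneg_of_posSemidef hV hle

lemma abs_apply_le_trace_of_posSemidef {W : Matrix m m ℝ} (hW : W.PosSemidef) (i j : m) :
    |W i j| ≤ W.trace := by
  classical
  have hdiag : ∀ l, W l l ≤ W.trace := fun l =>
    Finset.single_le_sum (f := fun l => W l l) (fun l _ => hW.diag_nonneg) (Finset.mem_univ l)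
  have hadd := (posSemidef_iff_isSymm_and_forall.1 hW).2 (Pi.single i 1 + Pi.single j 1)
  have hsub := (posSemidef_iff_isSymm_and_forall.1 hW).2 (Pi.single i 1 - Pi.single j 1)
  have hsymm : W j i = W i j := by simpa using hW.isHermitian.apply i j
  simp only [mulVec_add, mulVec_sub, mulVec_single_one, add_dotProduct, sub_dotProduct,
    dotProduct_add, dotProduct_sub, single_one_dotProduct, col_apply] at hadd hsub
  exact abs_le.2 ⟨by linarith [hdiag i, hdiag j], by linarith [hdiag i, hdiag j]⟩

lemma isCompact_setOf_posSemidef_trace_le (R : ℝ) :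
    IsCompact {W : Matrix m m ℝ | W.PosSemidef ∧ W.trace ≤ R} := by
  have hbox : IsCompact (Set.univ.pi fun _ : m => Set.univ.pi fun _ : m => Set.Icc (-R) R) :=
    isCompact_univ_pi fun _ => isCompact_univ_pi fun _ => isCompact_Icc
  exact hbox.of_isClosed_subset
    (isClosed_setOf_posSemidef.inter (isClosed_le continuous_id.matrix_trace continuous_const))
    fun W hW i _ j _ => abs_le.1 ((abs_apply_le_trace_of_posSemidef hW.1 i j).trans hW.2)

lemma exists_eq_trace_mul {n : Type*} [Fintype n] (g : Matrix m n ℝ →ₗ[ℝ] ℝ) :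
    ∃ G : Matrix n m ℝ, ∀ Z, g Z = (G * Z).trace := by
  classical
  refine ⟨.of fun j i => g (single i j 1), fun Z => ?_⟩
  refine LinearMap.congr_fun (f := g) (g := traceLinearMap n ℝ ℝ ∘ₗ mulLeftLinearMap n ℝ _)
    (ext_linearMap ℝ fun i j => LinearMap.ext_ring ?_) Z
  simp [trace_mul_single]

lemma exists_posSemidef_eq_trace_mul {g : Matrix m m ℝ →ₗ[ℝ] ℝ}
    (hg : ∀ Z : Matrix m m ℝ, Z.PosSemidef → 0 ≤ g Z) :
    ∃ Λ : Matrix m m ℝ, Λ.PosSemidef ∧ ∀ Z : Matrix m m ℝ, Z.IsSymm → g Z = (Λ * Z).trace := by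
  obtain ⟨G, hG⟩ := exists_eq_trace_mul g
  have hsymm : ∀ Z : Matrix m m ℝ, Z.IsSymm → g Z = (((1 / 2 : ℝ) • (G + Gᵀ)) * Z).trace := by
    intro Z hZ
    have hGt : (Gᵀ * Z).trace = g Z := by
      rw [hG, ← trace_transpose, transpose_mul, transpose_transpose, hZ.eq, trace_mul_comm]
    rw [smul_mul_assoc, trace_smul, add_mul, trace_add, hGt, ← hG, smul_eq_mul]
    ring
  refine ⟨_, posSemidef_iff_isSymm_and_forall.2 ⟨?_, fun x => ?_⟩, hsymm⟩
  · rw [Matrix.IsSymm, transpose_smul, transpose_add, transpose_transpose, add_comm]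
  · have hx := posSemidef_vecMulVec_self x
    rw [← trace_vecMulVec_mul, trace_mul_comm, ← hsymm _ (isHermitian_iff_isSymm.1 hx.1)]
    exact hg _ hx

lemma exists_posSemidef_multipliers {ι : Type*} [Fintype ι] {m : ι → Type*} [∀ k, Fintype (m k)]
    {g : (∀ k, Matrix (m k) (m k) ℝ) × ℝ →ₗ[ℝ] ℝ} (hg : ∀ z, 0 ≤ z → 0 ≤ g z) :
    ∃ Λ : ∀ k, Matrix (m k) (m k) ℝ, ∃ μ : ℝ, (∀ k, (Λ k).PosSemidef) ∧ 0 ≤ μ ∧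
      ∀ Z r, (∀ k, (Z k).IsSymm) → g (Z, r) = ∑ k, (Λ k * Z k).trace + μ * r := by
  classical
  have hcoord : ∀ k, ∀ Z : Matrix (m k) (m k) ℝ, Z.PosSemidef → 0 ≤ g (Pi.single k Z, 0) :=
    fun k Z hZ => hg _ ⟨Pi.single_nonneg.2 hZ.nonneg, le_rfl⟩
  choose Λ hΛ hΛg using fun k =>
    exists_posSemidef_eq_trace_mul
      (g := g ∘ₗ .inl ℝ _ ℝ ∘ₗ .single ℝ (fun k => Matrix (m k) (m k) ℝ) k) (hcoord k)
  refine ⟨Λ, g (0, 1), hΛ, hg _ ⟨le_rfl, zero_le_one⟩, fun Z r hZ => ?_⟩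
  have hsplit : (Z, r) = ∑ k, ((Pi.single k (Z k) : ∀ k, Matrix (m k) (m k) ℝ), (0 : ℝ))
      + r • ((0 : ∀ k, Matrix (m k) (m k) ℝ), (1 : ℝ)) := by
    ext1 <;> simp [Prod.fst_sum, Prod.snd_sum, Finset.univ_sum_single]
  rw [hsplit, map_add, map_sum, map_smul, smul_eq_mul, mul_comm]
  exact congrArg (· + _) (Finset.sum_congr rfl fun k _ => hΛg k _ (hZ k))

end PosSemidef

section SpectratopeMaps

variable {nb K : ℕ} {f : Fin K → ℕ}
  {Smat : (k : Fin K) → Fin nb → Matrix (Fin (f k)) (Fin (f k)) ℝ}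
  {fk : ℕ} {Sm : Fin nb → Matrix (Fin fk) (Fin fk) ℝ}

lemma calS_add (V W : Matrix (Fin nb) (Fin nb) ℝ) : calS Sm (V + W) = calS Sm V + calS Sm W := by
  simp only [calS, Matrix.add_apply, add_smul, Finset.sum_add_distrib]

lemma calS_smul (a : ℝ) (V : Matrix (Fin nb) (Fin nb) ℝ) : calS Sm (a • V) = a • calS Sm V := by
  simp only [calS, Matrix.smul_apply, smul_eq_mul, mul_smul, Finset.smul_sum]

lemma calS_isSymm (hSm : ∀ i, (Sm i).IsSymm) (V : Matrix (Fin nb) (Fin nb) ℝ) :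
    (calS Sm V).IsSymm := by
  simp only [Matrix.IsSymm, calS, transpose_sum, transpose_smul, transpose_add, transpose_mul,
    (hSm _).eq]
  exact Finset.sum_congr rfl fun i _ => Finset.sum_congr rfl fun j _ => by rw [add_comm]

lemma calSstar_isSymm (Λ : Matrix (Fin fk) (Fin fk) ℝ) : (calSstar Sm Λ).IsSymm := by
  ext i j
  simp only [calSstar, transpose_apply, of_apply, add_comm]

lemma trace_mul_calS (Λ : Matrix (Fin fk) (Fin fk) ℝ) (V : Matrix (Fin nb) (Fin nb) ℝ) :
    (Λ * calS Sm V).trace = (V * calSstar Sm Λ).trace := by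
  rw [← (calSstar_isSymm Λ).eq]
  simp only [calS, calSstar, Finset.mul_sum, trace_sum, mul_smul_comm, trace_smul]
  simp only [trace, diag_apply, mul_apply, transpose_apply, of_apply, smul_eq_mul]

lemma calS_vecMulVec_self (z : Fin nb → ℝ) :
    calS Sm (vecMulVec z z) = (∑ i, z i • Sm i) * (∑ i, z i • Sm i) := by
  have hleft : (∑ i, z i • Sm i) * (∑ i, z i • Sm i)
      = ∑ i, ∑ j, (z i * z j) • (Sm i * Sm j) := by
    simp only [Finset.sum_mul_sum, smul_mul_smul_comm]
  have hright : (∑ i, z i • Sm i) * (∑ i, z i • Sm i)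
      = ∑ i, ∑ j, (z i * z j) • (Sm j * Sm i) := by
    rw [hleft, Finset.sum_comm]
    simp only [mul_comm]
  calc calS Sm (vecMulVec z z)
      = (1 / 2 : ℝ) • (∑ i, ∑ j, (z i * z j) • (Sm i * Sm j)
          + ∑ i, ∑ j, (z i * z j) • (Sm j * Sm i)) := by
        simp only [calS, vecMulVec_apply, ← Finset.sum_add_distrib, Finset.smul_sum, ← smul_add,
          smul_comm (1 / 2 : ℝ)]
    _ = (∑ i, z i • Sm i) * (∑ i, z i • Sm i) := by
        rw [← hleft, ← hright, ← two_smul ℝ, smul_smul]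
        norm_num

lemma trace_mul_sum_calSstar (V : Matrix (Fin nb) (Fin nb) ℝ)
    (Λ : (k : Fin K) → Matrix (Fin (f k)) (Fin (f k)) ℝ) :
    (V * ∑ k, calSstar (Smat k) (Λ k)).trace = ∑ k, (Λ k * calS (Smat k) V).trace := by
  simp only [Finset.mul_sum, trace_sum, trace_mul_calS]

lemma isSymm_sum_calSstar (Λ : (k : Fin K) → Matrix (Fin (f k)) (Fin (f k)) ℝ) :
    (∑ k, calSstar (Smat k) (Λ k)).IsSymm := by
  simp only [Matrix.IsSymm, transpose_sum, (calSstar_isSymm _).eq]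

lemma posDef_sum_calSstar_one (hSm : ∀ k i, (Smat k i).IsSymm)
    (hnd : ∀ z : Fin nb → ℝ, (∀ k, (∑ i, z i • Smat k i) = 0) → z = 0) :
    (∑ k, calSstar (Smat k) 1).PosDef := by
  refine posDef_iff_dotProduct_mulVec.2
    ⟨isHermitian_iff_isSymm.2 (isSymm_sum_calSstar _), fun z hz => ?_⟩
  have hsquare : ∀ k, (1 * calS (Smat k) (vecMulVec z z))
      = (∑ i, z i • Smat k i)ᴴ * ∑ i, z i • Smat k i := fun k => by
    simp only [one_mul, calS_vecMulVec_self, conjTranspose_eq_transpose_of_trivial, transpose_sum,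
      transpose_smul, (hSm k _).eq]
  have hnonneg : ∀ k, 0 ≤ (1 * calS (Smat k) (vecMulVec z z)).trace := fun k => by
    rw [hsquare]
    exact (posSemidef_conjTranspose_mul_self _).trace_nonneg
  rw [star_trivial, ← trace_vecMulVec_mul, trace_mul_sum_calSstar]
  refine (Finset.sum_nonneg fun k _ => hnonneg k).lt_of_ne' fun hzero => hz (hnd z fun k => ?_)
  have := (Finset.sum_eq_zero_iff_of_nonneg fun k _ => hnonneg k).1 hzero k (Finset.mem_univ k)
  rwa [hsquare, trace_conjTranspose_mul_self_eq_zero_iff] at this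

end SpectratopeMaps

section BorderedMatrices

variable {nb : ℕ}

lemma trace_mul_qPlus (W : Matrix (Fin nb ⊕ Unit) (Fin nb ⊕ Unit) ℝ)
    (hW : W.IsSymm) (Q : Matrix (Fin nb) (Fin nb) ℝ) (q : Fin nb → ℝ) :
    (W * qPlus Q q).trace
      = (W.toBlocks₁₁ * Q).trace + 2 * ((fun i => W (.inl i) (.inr ())) ⬝ᵥ q) := by
  have hsymm : ∀ i, W (.inr ()) (.inl i) = W (.inl i) (.inr ()) := fun i => hW.apply _ _
  simp only [qPlus, trace, diag_apply, mul_apply, Fintype.sum_sum_type, fromBlocks_apply₁₁,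
    fromBlocks_apply₁₂, fromBlocks_apply₂₁, fromBlocks_apply₂₂, toBlocks₁₁, of_apply,
    Finset.univ_unique, Finset.sum_singleton, Finset.sum_add_distrib, dotProduct, hsymm,
    Matrix.zero_apply, PUnit.default_eq_unit]
  ring

lemma trace_mul_blockDiagOne (W : Matrix (Fin nb ⊕ Unit) (Fin nb ⊕ Unit) ℝ)
    (M : Matrix (Fin nb) (Fin nb) ℝ) (μ : ℝ) :
    (W * blockDiagOne M μ).trace
      = (W.toBlocks₁₁ * M).trace + W (.inr ()) (.inr ()) * μ := by
  simp [blockDiagOne, trace, mul_apply, toBlocks₁₁]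

lemma isSymm_qPlus {Q : Matrix (Fin nb) (Fin nb) ℝ} (hQ : Q.IsSymm) (q : Fin nb → ℝ) :
    (qPlus Q q).IsSymm :=
  hQ.fromBlocks rfl isSymm_zero

lemma isSymm_blockDiagOne {M : Matrix (Fin nb) (Fin nb) ℝ} (hM : M.IsSymm) (μ : ℝ) :
    (blockDiagOne M μ).IsSymm :=
  hM.fromBlocks transpose_zero rfl

end BorderedMatrices

section MomentProgram

open scoped MatrixOrder

variable {nb K : ℕ} {f : Fin K → ℕ}
  {Smat : (k : Fin K) → Fin nb → Matrix (Fin (f k)) (Fin (f k)) ℝ}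
  {T : Set (Fin K → ℝ)} {Q : Matrix (Fin nb) (Fin nb) ℝ} {q : Fin nb → ℝ}

lemma le_suppFn (hT : IsCompact T) {t : Fin K → ℝ} (ht : t ∈ T) (lam : Fin K → ℝ) :
    ∑ k, lam k * t k ≤ suppFn T lam :=
  le_csSup (hT.bddAbove_image (by fun_prop)) ⟨t, ht, rfl⟩

lemma exists_suppFn_eq (hT : IsCompact T) (hne : T.Nonempty) (lam : Fin K → ℝ) :
    ∃ t ∈ T, suppFn T lam = ∑ k, lam k * t k :=
  hT.exists_sSup_image_eq hne (by fun_prop)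

/-- The values `Tr(VQ) + 2vᵀq` of the primal program: `𝒮_k[V] ⪯ t_k I` with `t ∈ 𝒯` and
`[[V, v],[vᵀ, 1]] ⪰ 0`. -/
def primalValues (Smat : (k : Fin K) → Fin nb → Matrix (Fin (f k)) (Fin (f k)) ℝ)
    (T : Set (Fin K → ℝ)) (Q : Matrix (Fin nb) (Fin nb) ℝ) (q : Fin nb → ℝ) : Set ℝ :=
  {v | ∃ V : Matrix (Fin nb) (Fin nb) ℝ, ∃ w : Fin nb → ℝ, ∃ t ∈ T, V.IsSymm ∧
    (∀ k, (t k • (1 : Matrix (Fin (f k)) (Fin (f k)) ℝ) - calS (Smat k) V).PosSemidef) ∧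
    (Matrix.fromBlocks V (Matrix.of fun i (_ : Unit) => w i) (Matrix.of fun (_ : Unit) j => w j)
      (Matrix.of fun _ _ => (1 : ℝ))).PosSemidef ∧
    v = (V * Q).trace + 2 * (w ⬝ᵥ q)}

/-- The values `φ_𝒯(λ[Λ]) + μ` of the dual program, whose infimum is `Opt[1]`. -/
def dualValues (Smat : (k : Fin K) → Fin nb → Matrix (Fin (f k)) (Fin (f k)) ℝ)
    (T : Set (Fin K → ℝ)) (Q : Matrix (Fin nb) (Fin nb) ℝ) (q : Fin nb → ℝ) : Set ℝ :=
  {v | ∃ Λ : (k : Fin K) → Matrix (Fin (f k)) (Fin (f k)) ℝ, ∃ μ : ℝ,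
    (∀ k, (Λ k).PosSemidef) ∧ 0 ≤ μ ∧
    (blockDiagOne (∑ k, calSstar (Smat k) (Λ k)) μ - qPlus Q q).PosSemidef ∧
    v = suppFn T (lamOf Λ) + μ}

/-- The constraint map of the primal program in the variables `W = [[V, v],[vᵀ, s]]` and `t`: its
components are `𝒮_k[V] - t_k I` and the corner `s`. -/
def momentConstraint (Smat : (k : Fin K) → Fin nb → Matrix (Fin (f k)) (Fin (f k)) ℝ) :
    Matrix (Fin nb ⊕ Unit) (Fin nb ⊕ Unit) ℝ × (Fin K → ℝ) →L[ℝ]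
      ((k : Fin K) → Matrix (Fin (f k)) (Fin (f k)) ℝ) × ℝ where
  toFun y := (fun k => calS (Smat k) y.1.toBlocks₁₁ - y.2 k • 1, y.1 (.inr ()) (.inr ()))
  map_add' y y' := by
    refine Prod.ext (funext fun k => ?_) rfl
    change calS (Smat k) (y.1.toBlocks₁₁ + y'.1.toBlocks₁₁) - (y.2 k + y'.2 k) • 1 = _
    rw [calS_add, add_smul, add_sub_add_comm]
    rfl
  map_smul' a y := by
    refine Prod.ext (funext fun k => ?_) rfl
    change calS (Smat k) (a • y.1.toBlocks₁₁) - (a • y.2 k) • 1 = _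
    rw [calS_smul, smul_assoc, ← smul_sub]
    rfl
  cont := by
    unfold calS toBlocks₁₁
    fun_prop

/-- The semidefinite relaxation of the primal program in which the corner of
`W = [[V, v],[vᵀ, s]]` is only required to satisfy `s ≤ 1`. -/
def momentFeasible (Smat : (k : Fin K) → Fin nb → Matrix (Fin (f k)) (Fin (f k)) ℝ)
    (T : Set (Fin K → ℝ)) : Set (Matrix (Fin nb ⊕ Unit) (Fin nb ⊕ Unit) ℝ × (Fin K → ℝ)) :=
  {y ∈ {W | W.PosSemidef} ×ˢ T | momentConstraint Smat y ≤ (0, 1)}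

/-- The objective `W ↦ Tr(W Q₊)` of the primal program. -/
def momentObjective (Q : Matrix (Fin nb) (Fin nb) ℝ) (q : Fin nb → ℝ) :
    Matrix (Fin nb ⊕ Unit) (Fin nb ⊕ Unit) ℝ × (Fin K → ℝ) →L[ℝ] ℝ where
  toFun y := (y.1 * qPlus Q q).trace
  map_add' y y' := by simp only [Prod.fst_add, add_mul, trace_add]
  map_smul' a y := by simp only [Prod.smul_fst, smul_mul, trace_smul, RingHom.id_apply]
  cont := (continuous_fst.matrix_mul continuous_const).matrix_trace

lemma mem_momentFeasible_iff {y : Matrix (Fin nb ⊕ Unit) (Fin nb ⊕ Unit) ℝ × (Fin K → ℝ)} :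
    y ∈ momentFeasible Smat T ↔ (y.1.PosSemidef ∧ y.2 ∈ T) ∧
      (∀ k, (y.2 k • 1 - calS (Smat k) y.1.toBlocks₁₁).PosSemidef) ∧
      y.1 (.inr ()) (.inr ()) ≤ 1 := by
  refine and_congr Iff.rfl (and_congr (forall_congr' fun k => ?_) Iff.rfl)
  simp [momentConstraint, Matrix.le_iff]

lemma exists_mem_momentFeasible_of_mem_primalValues {v : ℝ} (hv : v ∈ primalValues Smat T Q q) :
    ∃ y ∈ momentFeasible Smat T, momentObjective Q q y = v := by
  obtain ⟨V, w, t, ht, -, hVt, hW, rfl⟩ := hv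
  refine ⟨(_, t), mem_momentFeasible_iff.2 ⟨⟨hW, ht⟩, hVt, le_rfl⟩, ?_⟩
  exact trace_mul_qPlus _ (isHermitian_iff_isSymm.1 hW.1) Q q

lemma momentObjective_mem_primalValues
    {y : Matrix (Fin nb ⊕ Unit) (Fin nb ⊕ Unit) ℝ × (Fin K → ℝ)}
    (hy : y ∈ momentFeasible Smat T) : momentObjective Q q y ∈ primalValues Smat T Q q := by
  obtain ⟨⟨hW, ht⟩, hS, hcorner⟩ := mem_momentFeasible_iff.1 hy
  have hsymm := isHermitian_iff_isSymm.1 hW.1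
  refine ⟨y.1.toBlocks₁₁, fun i => y.1 (.inl i) (.inr ()), y.2, ht, ?_, hS, ?_,
    trace_mul_qPlus _ hsymm Q q⟩
  · exact congrArg toBlocks₁₁ hsymm.eq
  · -- `Q₊` has zero corner, so raising the corner of `W` to `1` keeps the objective.
    have hbump := hW.add ((posSemidef_vecMulVec_self (Pi.single (.inr ()) 1)).smul
      (sub_nonneg.2 hcorner))
    convert hbump using 1
    ext (i | i) (j | j) <;> simp [toBlocks₁₁, vecMulVec_apply, hsymm.apply]

lemma lagrangian_eq (W : Matrix (Fin nb ⊕ Unit) (Fin nb ⊕ Unit) ℝ) (t : Fin K → ℝ)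
    (Λ : (k : Fin K) → Matrix (Fin (f k)) (Fin (f k)) ℝ) (μ : ℝ) :
    (W * qPlus Q q).trace + (∑ k, (Λ k * (t k • 1 - calS (Smat k) W.toBlocks₁₁)).trace
        + μ * (1 - W (.inr ()) (.inr ())))
      = ∑ k, lamOf Λ k * t k + μ
        - (W * (blockDiagOne (∑ k, calSstar (Smat k) (Λ k)) μ - qPlus Q q)).trace := by
  simp only [mul_sub, trace_sub, trace_mul_blockDiagOne, trace_mul_sum_calSstar, mul_smul_comm,
    mul_one, trace_smul, smul_eq_mul, Finset.sum_sub_distrib, lamOf, mul_comm (Matrix.trace _)]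
  ring

lemma momentObjective_le_of_mem_dualValues (hT : IsCompact T)
    {y : Matrix (Fin nb ⊕ Unit) (Fin nb ⊕ Unit) ℝ × (Fin K → ℝ)}
    (hy : y ∈ momentFeasible Smat T) {d : ℝ} (hd : d ∈ dualValues Smat T Q q) :
    momentObjective Q q y ≤ d := by
  obtain ⟨⟨hW, ht⟩, hS, hcorner⟩ := mem_momentFeasible_iff.1 hy
  obtain ⟨Λ, μ, hΛ, hμ, hD, rfl⟩ := hd
  have hpair : 0 ≤ ∑ k, (Λ k * (y.2 k • 1 - calS (Smat k) y.1.toBlocks₁₁)).trace :=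
    Finset.sum_nonneg fun k _ => trace_mul_nonneg_of_posSemidef (hΛ k) (hS k)
  have hslack := mul_nonneg hμ (sub_nonneg.2 hcorner)
  have hdual := trace_mul_nonneg_of_posSemidef hW hD
  have hsupp := le_suppFn hT ht (lamOf Λ)
  have hlag := lagrangian_eq (Smat := Smat) (Q := Q) (q := q) y.1 y.2 Λ μ
  change (y.1 * qPlus Q q).trace ≤ _
  linarith

lemma hasCompactSublevels_momentConstraint (hSm : ∀ k i, (Smat k i).IsSymm)
    (hnd : ∀ z : Fin nb → ℝ, (∀ k, (∑ i, z i • Smat k i) = 0) → z = 0) (hT : IsCompact T) :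
    HasCompactSublevels ({W | W.PosSemidef} ×ˢ T) (momentConstraint Smat) := by
  intro B hB
  obtain ⟨δ, hδ, hδle⟩ := exists_pos_mul_trace_le_trace_mul (posDef_sum_calSstar_one hSm hnd)
  obtain ⟨R, hR⟩ := (hB.prod hT).bddAbove_image
    (f := fun p : (((k : Fin K) → Matrix (Fin (f k)) (Fin (f k)) ℝ) × ℝ) × (Fin K → ℝ) =>
      (∑ k, ((p.1.1 k).trace + p.2 k * (f k : ℝ))) / δ + p.1.2)
    (by unfold Matrix.trace; fun_prop)
  refine ⟨_, (isCompact_setOf_posSemidef_trace_le R).prod hT, fun y hy z hz hle => ?_⟩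
  refine ⟨⟨hy.1, le_trans ?_ (hR ⟨(z, y.2), ⟨hz, hy.2⟩, rfl⟩)⟩, hy.2⟩
  have hsplit : y.1.trace = y.1.toBlocks₁₁.trace + y.1 (.inr ()) (.inr ()) := by
    simp [trace, toBlocks₁₁]
  have hcalS : ∀ k, (calS (Smat k) y.1.toBlocks₁₁).trace ≤ (z.1 k).trace + y.2 k * f k :=
    fun k => by
      have hgap : 0 ≤ (z.1 k - (calS (Smat k) y.1.toBlocks₁₁ - y.2 k • 1)).trace :=
        (Matrix.le_iff.1 (hle.1 k)).trace_nonneg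
      simp only [trace_sub, trace_smul, trace_one, Fintype.card_fin, smul_eq_mul] at hgap
      linarith
  have hV : y.1.toBlocks₁₁.trace ≤ (∑ k, ((z.1 k).trace + y.2 k * f k)) / δ := by
    rw [le_div_iff₀' hδ]
    refine (hδle y.1.toBlocks₁₁ (hy.1.submatrix _)).trans ?_
    rw [trace_mul_sum_calSstar]
    simpa only [one_mul] using Finset.sum_le_sum fun k _ => hcalS k
  exact hsplit.trans_le (add_le_add hV hle.2)

lemma isCompact_momentFeasible (hSm : ∀ k i, (Smat k i).IsSymm)
    (hnd : ∀ z : Fin nb → ℝ, (∀ k, (∑ i, z i • Smat k i) = 0) → z = 0) (hT : IsCompact T) :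
    IsCompact (momentFeasible Smat T) :=
  (hasCompactSublevels_momentConstraint hSm hnd hT).isCompact_setOf_le
    (isClosed_setOf_posSemidef.prod hT.isClosed) (momentConstraint Smat).continuous (0, 1)

lemma nonempty_momentFeasible (hT : ∃ t ∈ T, ∀ k, 0 ≤ t k) :
    (momentFeasible Smat T).Nonempty := by
  obtain ⟨t, ht, htnonneg⟩ := hT
  refine ⟨(0, t), mem_momentFeasible_iff.2 ⟨⟨.zero, ht⟩, fun k => ?_, zero_le_one⟩⟩
  simpa [calS, toBlocks₁₁] using PosSemidef.one.smul (htnonneg k)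

lemma exists_mem_dualValues_le (hSm : ∀ k i, (Smat k i).IsSymm)
    (hnd : ∀ z : Fin nb → ℝ, (∀ k, (∑ i, z i • Smat k i) = 0) → z = 0)
    (hTconv : Convex ℝ T) (hTcomp : IsCompact T) (hQ : Q.IsSymm)
    (hne : (momentFeasible Smat T).Nonempty) {c : ℝ}
    (hc : ∀ y ∈ momentFeasible Smat T, momentObjective Q q y < c) :
    ∃ d ∈ dualValues Smat T Q q, d ≤ c := by
  have hclosed := (hasCompactSublevels_momentConstraint hSm hnd hTcomp).isClosed_valueHypograph
    (isClosed_setOf_posSemidef.prod hTcomp.isClosed) (momentObjective Q q)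
  obtain ⟨y₀, hy₀, hy₀le⟩ := hne
  obtain ⟨g, hg, hgc⟩ := exists_nonneg_multiplier (convex_setOf_posSemidef.prod hTconv) hclosed
    ⟨y₀, hy₀, hy₀le⟩ fun y hy hle => hc y ⟨hy, hle⟩
  obtain ⟨Λ, μ, hΛ, hμ, hgΛ⟩ := exists_posSemidef_multipliers (g := g.toLinearMap) hg
  have hlag : ∀ W : Matrix (Fin nb ⊕ Unit) (Fin nb ⊕ Unit) ℝ, W.PosSemidef → ∀ t ∈ T,
      ∑ k, lamOf Λ k * t k + μ
        - (W * (blockDiagOne (∑ k, calSstar (Smat k) (Λ k)) μ - qPlus Q q)).trace ≤ c := by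
    intro W hW t ht
    have hslack : (0, 1) - momentConstraint Smat (W, t)
        = (fun k => t k • 1 - calS (Smat k) W.toBlocks₁₁, 1 - W (.inr ()) (.inr ())) :=
      Prod.ext (funext fun k => zero_sub _ |>.trans (neg_sub _ _)) rfl
    have hbound := hgc (W, t) ⟨hW, ht⟩
    rw [hslack] at hbound
    rw [← lagrangian_eq, ← hgΛ _ _ fun k => (isSymm_one.smul _).sub (calS_isSymm (hSm k) _)]
    exact hbound
  refine ⟨_, ⟨Λ, μ, hΛ, hμ, ?_, rfl⟩, ?_⟩
  · refine posSemidef_of_forall_le_trace_mul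
      ((isSymm_blockDiagOne (isSymm_sum_calSstar Λ) μ).sub (isSymm_qPlus hQ q))
      (a := ∑ k, lamOf Λ k * y₀.2 k + μ - c) fun W hW => ?_
    linarith [hlag W hW y₀.2 hy₀.2]
  · obtain ⟨t, ht, hsupp⟩ := exists_suppFn_eq hTcomp ⟨y₀.2, hy₀.2⟩ (lamOf Λ)
    simpa only [hsupp, Matrix.zero_mul, trace_zero, sub_zero] using hlag 0 .zero t ht

end MomentProgram

theorem stmt16_general {nb K : ℕ} {f : Fin K → ℕ}
    {Smat : (k : Fin K) → Fin nb → Matrix (Fin (f k)) (Fin (f k)) ℝ}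
    (hSm : ∀ k i, (Smat k i).IsSymm)
    (hnd : ∀ z : Fin nb → ℝ, (∀ k, (∑ i, z i • Smat k i) = 0) → z = 0)
    {T : Set (Fin K → ℝ)} (hTconv : Convex ℝ T) (hTcomp : IsCompact T)
    (hTfeas : ∃ t ∈ T, ∀ k, 0 ≤ t k)
    {Q : Matrix (Fin nb) (Fin nb) ℝ} (hQ : Q.IsSymm) (q : Fin nb → ℝ) :
    IsGreatest (primalValues Smat T Q q) (sInf (dualValues Smat T Q q)) := by
  have hne := nonempty_momentFeasible (Smat := Smat) hTfeas
  obtain ⟨y, hy, hmax⟩ := (isCompact_momentFeasible hSm hnd hTcomp).exists_isMaxOn hne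
    (momentObjective Q q).continuous.continuousOn
  have hdual : ∀ c, momentObjective Q q y < c → ∃ d ∈ dualValues Smat T Q q, d ≤ c := fun c hc =>
    exists_mem_dualValues_le hSm hnd hTconv hTcomp hQ hne fun y' hy' => (hmax hy').trans_lt hc
  have hglb : IsGLB (dualValues Smat T Q q) (momentObjective Q q y) := by
    refine ⟨fun d hd => momentObjective_le_of_mem_dualValues hTcomp hy hd, fun b hb => ?_⟩
    refine le_of_forall_gt_imp_ge_of_dense fun c hc => ?_
    obtain ⟨d, hd, hdc⟩ := hdual c hc
    exact (hb hd).trans hdc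
  obtain ⟨d, hd, -⟩ := hdual _ (lt_add_one _)
  rw [hglb.csInf_eq ⟨d, hd⟩]
  refine ⟨momentObjective_mem_primalValues hy, fun v hv => ?_⟩
  obtain ⟨y', hy', rfl⟩ := exists_mem_momentFeasible_of_mem_primalValues hv
  exact hmax hy'

theorem stmt16 {nb K : ℕ} (hK : 1 ≤ K)
    (f : Fin K → ℕ) (hf : ∀ k, 1 ≤ f k)
    (Smat : (k : Fin K) → Fin nb → Matrix (Fin (f k)) (Fin (f k)) ℝ)
    (hSm : ∀ k i, (Smat k i).IsSymm)
    (hnd : ∀ z : Fin nb → ℝ, (∀ k, (∑ i, z i • Smat k i) = 0) → z = 0)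
    (T : Set (Fin K → ℝ))
    (hTne : T.Nonempty) (hTconv : Convex ℝ T) (hTcomp : IsCompact T)
    (hTnonneg : ∀ t ∈ T, ∀ k, 0 ≤ t k)
    (hTmono : ∀ t t' : Fin K → ℝ, (∀ k, 0 ≤ t k) → (∀ k, t k ≤ t' k) → t' ∈ T → t ∈ T)
    (hTpos : ∃ t ∈ T, ∀ k, 0 < t k)
    (Q : Matrix (Fin nb) (Fin nb) ℝ) (hQ : Q.IsSymm) (q : Fin nb → ℝ) :
    IsGreatest
      {v : ℝ | ∃ V : Matrix (Fin nb) (Fin nb) ℝ, ∃ w : Fin nb → ℝ, ∃ t ∈ T,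
        V.IsSymm ∧
        (∀ k, (t k • (1 : Matrix (Fin (f k)) (Fin (f k)) ℝ)
                - calS (Smat k) V).PosSemidef) ∧
        (Matrix.fromBlocks V (Matrix.of fun i (_ : Unit) => w i)
          (Matrix.of fun (_ : Unit) j => w j)
          (Matrix.of fun _ _ => (1 : ℝ))).PosSemidef ∧
        v = (V * Q).trace + 2 * (w ⬝ᵥ q)}
      (sInf {v : ℝ | ∃ Λ : (k : Fin K) → Matrix (Fin (f k)) (Fin (f k)) ℝ, ∃ μ : ℝ,
        (∀ k, (Λ k).PosSemidef) ∧ 0 ≤ μ ∧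
        (blockDiagOne (∑ k, calSstar (Smat k) (Λ k)) μ - qPlus Q q).PosSemidef ∧
        v = suppFn T (lamOf Λ) + μ}) := by
  exact stmt16_general hSm hnd hTconv hTcomp (hTne.imp fun t ht => ⟨ht, hTnonneg t ht⟩) hQ q
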